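/- arXiv:1306.2837 — 3 statements merged into one kernel-verified Lean document; each statement's English description precedes it below -/
import Mathlib

section
/- Let R be an associative unital ring with unit e and let α, β, γ ∈ R. If the 2×2 matrix Υ := [[0, −β],[α, γ]] is invertible in the matrix ring M₂(R), then α is left invertible and β is right invertible in R. If, in addition, one of the two elements α, β is (two-sided) invertible in R, then so is the other. -/
/-- In a unital ring `R`, if the matrix `Υ = [[0, −β],[α, γ]]` is invertible
in `M₂(R)`, then `α` is left invertible and `β` is right invertible; if moreover one of
`α`, `β` is invertible, then so is the other. -/
theorem stmt3 (R : Type*) [Ring R] (α β γ : R)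
    (h : IsUnit (!![0, -β; α, γ] : Matrix (Fin 2) (Fin 2) R)) :
    (∃ l : R, l * α = 1) ∧ (∃ r : R, β * r = 1) ∧
    (IsUnit α ∨ IsUnit β → IsUnit α ∧ IsUnit β) := by
  obtain ⟨V, hr, hl⟩ := isUnit_iff_exists.mp h
  have hβc : β * -V 1 0 = 1 := by
    simpa [Matrix.mul_apply, Fin.sum_univ_two] using congrFun₂ hr 0 0
  have hβd : β * V 1 1 = 0 := by
    simpa [Matrix.mul_apply, Fin.sum_univ_two] using congrFun₂ hr 0 1
  have hαb : α * V 0 1 + γ * V 1 1 = 1 := by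
    simpa [Matrix.mul_apply, Fin.sum_univ_two] using congrFun₂ hr 1 1
  have hbα : V 0 1 * α = 1 := by
    simpa [Matrix.mul_apply, Fin.sum_univ_two] using congrFun₂ hl 0 0
  have hdα : V 1 1 * α = 0 := by
    simpa [Matrix.mul_apply, Fin.sum_univ_two] using congrFun₂ hl 1 0
  have hcβ : -(V 1 0 * β) + V 1 1 * γ = 1 := by
    simpa [Matrix.mul_apply, Fin.sum_univ_two] using congrFun₂ hl 1 1
  refine ⟨⟨_, hbα⟩, ⟨_, hβc⟩, ?_⟩
  rintro (hα | hβ)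
  · have hd : V 1 1 = 0 := hα.mul_left_eq_zero.mp hdα
    exact ⟨hα, isUnit_iff_exists.mpr ⟨_, hβc, by simpa [hd] using hcβ⟩⟩
  · have hd : V 1 1 = 0 := hβ.mul_right_eq_zero.mp hβd
    exact ⟨isUnit_iff_exists.mpr ⟨_, by simpa [hd] using hαb, hbα⟩, hβ⟩
end

section
/- For 1 < p < ∞ define h_p : ℝ → ℂ by h_p(y) := 1 / sinh(π(y + i/p)), and set Ω₁ := {z ∈ ℂ : Im z ≤ 0 and Re z ≥ 0}, Ω₂ := {z ∈ ℂ : Im z ≤ 0 and Re z ≤ 0}. If 1 < p ≤ 2, then h_p(y) ∈ Ω₁ for all y ≤ 0 and h_p(y) ∈ Ω₂ for all y ≥ 0. If 2 ≤ p < ∞, then h_p(y) ∈ Ω₂ for all y ≤ 0 and h_p(y) ∈ Ω₁ for all y ≥ 0. -/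
theorem Complex.sinh_ofReal_add_ofReal_mul_I_re (a b : ℝ) :
    (Complex.sinh (a + b * Complex.I)).re = Real.sinh a * Real.cos b := by
  rw [Complex.sinh_add, Complex.sinh_mul_I, Complex.cosh_mul_I, ← Complex.ofReal_sinh,
    ← Complex.ofReal_cosh, ← Complex.ofReal_sin, ← Complex.ofReal_cos]
  simp [-Complex.ofReal_sinh, -Complex.ofReal_cosh, -Complex.ofReal_sin, -Complex.ofReal_cos]

theorem Complex.sinh_ofReal_add_ofReal_mul_I_im (a b : ℝ) :
    (Complex.sinh (a + b * Complex.I)).im = Real.cosh a * Real.sin b := by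
  rw [Complex.sinh_add, Complex.sinh_mul_I, Complex.cosh_mul_I, ← Complex.ofReal_sinh,
    ← Complex.ofReal_cosh, ← Complex.ofReal_sin, ← Complex.ofReal_cos]
  simp [-Complex.ofReal_sinh, -Complex.ofReal_cosh, -Complex.ofReal_sin, -Complex.ofReal_cos]

/-- For `1 < p < ∞` and `h_p(y) = 1 / sinh(π(y + i/p))`, with
`Ω₁ = {Im z ≤ 0, Re z ≥ 0}` and `Ω₂ = {Im z ≤ 0, Re z ≤ 0}`: if `1 < p ≤ 2` then
`h_p(y) ∈ Ω₁` for `y ≤ 0` and `h_p(y) ∈ Ω₂` for `y ≥ 0`; if `2 ≤ p < ∞` then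
`h_p(y) ∈ Ω₂` for `y ≤ 0` and `h_p(y) ∈ Ω₁` for `y ≥ 0`. -/
theorem stmt17 (p : ℝ) (hp : 1 < p) (h : ℝ → ℂ)
    (hdef : ∀ y : ℝ, h y = 1 / Complex.sinh (Real.pi * (y + Complex.I / p))) :
    (p ≤ 2 → ∀ y : ℝ,
      (y ≤ 0 → (h y).im ≤ 0 ∧ 0 ≤ (h y).re) ∧
      (0 ≤ y → (h y).im ≤ 0 ∧ (h y).re ≤ 0)) ∧
    (2 ≤ p → ∀ y : ℝ,
      (y ≤ 0 → (h y).im ≤ 0 ∧ (h y).re ≤ 0) ∧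
      (0 ≤ y → (h y).im ≤ 0 ∧ 0 ≤ (h y).re)) := by
  have hp0 : 0 < p := by linarith
  have hpi := Real.pi_pos
  have harg (y : ℝ) : (Real.pi * (y + Complex.I / p) : ℂ) =
      ((Real.pi * y : ℝ) : ℂ) + ((Real.pi / p : ℝ) : ℂ) * Complex.I := by
    push_cast
    ring
  have hre (y : ℝ) : (h y).re = Real.sinh (Real.pi * y) * Real.cos (Real.pi / p) /
      Complex.normSq (Complex.sinh (Real.pi * (y + Complex.I / p))) := by
    rw [hdef, one_div, Complex.inv_re, harg, Complex.sinh_ofReal_add_ofReal_mul_I_re]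
  have him (y : ℝ) : (h y).im ≤ 0 := by
    rw [hdef, one_div, Complex.inv_im, harg, Complex.sinh_ofReal_add_ofReal_mul_I_im]
    have hsin : 0 ≤ Real.sin (Real.pi / p) :=
      Real.sin_nonneg_of_nonneg_of_le_pi (by positivity) (div_le_self hpi.le hp.le)
    exact div_nonpos_of_nonpos_of_nonneg
      (neg_nonpos.2 (mul_nonneg (Real.cosh_pos _).le hsin)) (Complex.normSq_nonneg _)
  have hsinh_nonpos {y : ℝ} (hy : y ≤ 0) : Real.sinh (Real.pi * y) ≤ 0 :=
    Real.sinh_nonpos_iff.2 (mul_nonpos_of_nonneg_of_nonpos hpi.le hy)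
  have hsinh_nonneg {y : ℝ} (hy : 0 ≤ y) : 0 ≤ Real.sinh (Real.pi * y) :=
    Real.sinh_nonneg_iff.2 (mul_nonneg hpi.le hy)
  refine ⟨fun hp2 y => ?_, fun hp2 y => ?_⟩
  · have hcos : Real.cos (Real.pi / p) ≤ 0 :=
      Real.cos_nonpos_of_pi_div_two_le_of_le (by gcongr)
        ((div_le_self hpi.le hp.le).trans (by linarith))
    refine ⟨fun hy => ⟨him y, ?_⟩, fun hy => ⟨him y, ?_⟩⟩ <;> rw [hre]
    · exact div_nonneg (mul_nonneg_of_nonpos_of_nonpos (hsinh_nonpos hy) hcos)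
        (Complex.normSq_nonneg _)
    · exact div_nonpos_of_nonpos_of_nonneg
        (mul_nonpos_of_nonneg_of_nonpos (hsinh_nonneg hy) hcos) (Complex.normSq_nonneg _)
  · have hcos : 0 ≤ Real.cos (Real.pi / p) :=
      Real.cos_nonneg_of_neg_pi_div_two_le_of_le
        ((by linarith : -(Real.pi / 2) ≤ 0).trans (by positivity)) (by gcongr)
    refine ⟨fun hy => ⟨him y, ?_⟩, fun hy => ⟨him y, ?_⟩⟩ <;> rw [hre]
    · exact div_nonpos_of_nonpos_of_nonneg
        (mul_nonpos_of_nonpos_of_nonneg (hsinh_nonpos hy) hcos) (Complex.normSq_nonneg _)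
    · exact div_nonneg (mul_nonneg (hsinh_nonneg hy) hcos) (Complex.normSq_nonneg _)
end

section
/- For 1 < p < ∞ define h_p : ℝ → ℂ by h_p(y) := 1 / sinh(π(y + i/p)). Then for every y ∈ ℝ the inequality |Im h_p(y)| ≤ 1 / sin(π/p) holds, and equality holds if and only if y = 0. -/
theorem im_inv_sinh_add_mul_I (a b : ℝ) :
    ((Complex.sinh (a + b * Complex.I))⁻¹).im =
      -(Real.cosh a * Real.sin b) / (Real.cosh a ^ 2 - 1 + Real.sin b ^ 2) := by
  have hsinh : Complex.sinh (a + b * Complex.I) =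
      ((Real.sinh a * Real.cos b : ℝ) : ℂ) + ((Real.cosh a * Real.sin b : ℝ) : ℂ) * Complex.I := by
    rw [Complex.sinh_add, Complex.cosh_mul_I, Complex.sinh_mul_I]
    push_cast
    ring
  rw [hsinh, Complex.inv_im, Complex.normSq_add_mul_I]
  congr 1
  · rw [Complex.add_im, Complex.ofReal_im, Complex.im_ofReal_mul, Complex.I_im, zero_add, mul_one]
  · rw [mul_pow, mul_pow, Real.cos_sq', Real.sinh_sq]
    ring

/-- For `1 < p < ∞` and `h_p(y) = 1 / sinh(π(y + i/p))`, the inequality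
`|Im h_p(y)| ≤ 1 / sin(π/p)` holds for all real `y`, with equality if and only if `y = 0`. -/
theorem stmt18 (p : ℝ) (hp : 1 < p) (h : ℝ → ℂ)
    (hdef : ∀ y : ℝ, h y = 1 / Complex.sinh (Real.pi * (y + Complex.I / p))) :
    ∀ y : ℝ, |(h y).im| ≤ 1 / Real.sin (Real.pi / p) ∧
      (|(h y).im| = 1 / Real.sin (Real.pi / p) ↔ y = 0) := by
  intro y
  have hp0 : 0 < p := one_pos.trans hp
  have hs : 0 < Real.sin (Real.pi / p) :=
    Real.sin_pos_of_pos_of_lt_pi (by positivity) (div_lt_self Real.pi_pos hp)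
  have hs1 := Real.sin_le_one (Real.pi / p)
  have hc := Real.one_le_cosh (Real.pi * y)
  have hc1 : Real.cosh (Real.pi * y) = 1 ↔ y = 0 := by
    refine ⟨fun hcosh => ?_, fun hy => by simp [hy]⟩
    by_contra hy
    exact (Real.one_lt_cosh.2 (mul_ne_zero Real.pi_ne_zero hy)).ne' hcosh
  have him : (h y).im = -(Real.cosh (Real.pi * y) * Real.sin (Real.pi / p)) /
      (Real.cosh (Real.pi * y) ^ 2 - 1 + Real.sin (Real.pi / p) ^ 2) := by
    rw [← im_inv_sinh_add_mul_I, hdef, one_div]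
    congr 3
    push_cast
    ring
  rw [← hc1, him]
  generalize Real.cosh (Real.pi * y) = c at *
  generalize Real.sin (Real.pi / p) = s at *
  have hden : 0 < c ^ 2 - 1 + s ^ 2 := by nlinarith
  have hfactor : 0 < c + 1 - s ^ 2 := by nlinarith
  rw [neg_div, abs_neg, abs_of_nonneg (by positivity), div_le_div_iff₀ hden hs,
    div_eq_div_iff hden.ne' hs.ne']
  refine ⟨by nlinarith [mul_nonneg (sub_nonneg.2 hc) hfactor.le], fun heq => ?_, ?_⟩
  · have hprod : (c - 1) * (c + 1 - s ^ 2) = 0 := by linear_combination -heq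
    linarith [(mul_eq_zero.1 hprod).resolve_right hfactor.ne']
  · rintro rfl
    ring
end
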